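/- arXiv:1003.3907 — 2 statements merged into one kernel-verified Lean document; each statement's English description precedes it below -/
import Mathlib

section
/- Let λ, μ > 0 be real numbers and let α, β ≥ 0 satisfy α + β ≥ 1 or α + β ≤ 1/2. Then (λ + μ + f_{α+β}(λ,μ))² − (f_α(λ,μ) + f_β(λ,μ))² ≥ 16αβ(λ − μ)²; equivalently, {λ + μ + f_{α+β}(λ,μ) − f_α(λ,μ) − f_β(λ,μ)} · {λ + μ + f_{α+β}(λ,μ) + f_α(λ,μ) + f_β(λ,μ)} ≥ 16αβ(λ − μ)². -/
/-!
Write `λ = m eᵗ`, `μ = m e⁻ᵗ`, so that `f_a(λ,μ) = 2m cosh((2a-1)t)`. With `s = α + β` and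
`d = α - β`, the sum-to-product formulas turn the left-hand side into
`16 m² cosh²((1-s)t) (sinh²(st) - sinh²(dt))`, and the claim becomes
`cosh²((1-s)t) (sinh²(st) - sinh²(dt)) ≥ (s² - d²) sinh² t`.

Everything now follows from `sinh (c x) ≤ c sinh x` for `c ∈ [0,1]`, `x ≥ 0` (convexity of `sinh`
on the half-line). Since `|d| ≤ s`, it gives `s |sinh(dt)| ≤ |d| sinh(st)`, which reduces the claim
to the case `d = 0`, that is to `cosh((1-s)t) sinh(st) ≥ s sinh t`. The left side of the latter is
`(sinh t + sinh((2s-1)t)) / 2`, so it holds for `s ≥ 1` and for `0 ≤ s ≤ 1/2`.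
-/

/-- `f_α(x,y) = x^α y^{1−α} + x^{1−α} y^α`. -/
noncomputable def fWYD (a x y : ℝ) : ℝ := x ^ a * y ^ (1 - a) + x ^ (1 - a) * y ^ a

open Real

lemma sinh_mul_le {c x : ℝ} (hc0 : 0 ≤ c) (hc1 : c ≤ 1) (hx : 0 ≤ x) :
    sinh (c * x) ≤ c * sinh x := by
  have hconv : ConvexOn ℝ (Set.Ici 0) sinh := by
    apply MonotoneOn.convexOn_of_deriv (convex_Ici 0) continuous_sinh.continuousOn
      differentiable_sinh.differentiableOn
    intro a ha b hb hab
    rw [interior_Ici, Set.mem_Ioi] at ha hb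
    rw [Real.deriv_sinh, cosh_le_cosh, abs_of_pos ha, abs_of_pos hb]
    exact hab
  have h := hconv.2 (Set.mem_Ici.2 hx) (Set.mem_Ici.2 le_rfl) hc0 (sub_nonneg.2 hc1) (by ring)
  simpa using h

/-- The case `d = 0` of the hyperbolic inequality, after taking square roots. -/
lemma mul_sinh_le_cosh_mul_sinh {s t : ℝ} (hs : 0 ≤ s) (ht : 0 ≤ t) (hcond : 1 ≤ s ∨ s ≤ 1 / 2) :
    s * sinh t ≤ cosh ((1 - s) * t) * sinh (s * t) := by
  have h1 : sinh t = sinh (s * t) * cosh ((1 - s) * t) + cosh (s * t) * sinh ((1 - s) * t) := by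
    rw [← sinh_add]; ring_nf
  have h2 : sinh ((2 * s - 1) * t)
      = sinh (s * t) * cosh ((1 - s) * t) - cosh (s * t) * sinh ((1 - s) * t) := by
    rw [← sinh_sub]; ring_nf
  have h3 : (2 * s - 1) * sinh t ≤ sinh ((2 * s - 1) * t) := by
    rcases hcond with h | h
    · have hpos : 0 < 2 * s - 1 := by linarith
      have h4 := sinh_mul_le (c := (2 * s - 1)⁻¹) (x := (2 * s - 1) * t) (inv_nonneg.2 hpos.le)
        (inv_le_one_of_one_le₀ (by linarith)) (mul_nonneg hpos.le ht)
      rwa [inv_mul_cancel_left₀ hpos.ne', le_inv_mul_iff₀ hpos] at h4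
    · have h4 := sinh_mul_le (c := 1 - 2 * s) (by linarith) (by linarith) ht
      have h5 : sinh ((2 * s - 1) * t) = -sinh ((1 - 2 * s) * t) := by
        rw [← sinh_neg]; ring_nf
      linarith
  linarith

lemma sq_mul_sinh_sq_le {s d t : ℝ} (hs : 0 < s) (hd : |d| ≤ s) (ht : 0 ≤ t) :
    s ^ 2 * sinh (d * t) ^ 2 ≤ d ^ 2 * sinh (s * t) ^ 2 := by
  have h := sinh_mul_le (c := |d| / s) (x := s * t) (by positivity) ((div_le_one hs).2 hd)
    (by positivity)
  rw [show |d| / s * (s * t) = |d| * t by field_simp, div_mul_eq_mul_div, le_div_iff₀ hs] at h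
  have h0 : 0 ≤ sinh (|d| * t) := sinh_nonneg_iff.2 (by positivity)
  have h2 := pow_le_pow_left₀ (by positivity) h 2
  have h3 : sinh (|d| * t) ^ 2 = sinh (d * t) ^ 2 := by
    rcases abs_choice d with e | e <;> rw [e]
    rw [neg_mul, sinh_neg, neg_sq]
  rw [mul_pow, mul_pow, h3, sq_abs] at h2
  linarith

/-- The theorem in hyperbolic form, with `s = α + β`, `d = α - β`. -/
lemma hyperbolic_ineq {s d t : ℝ} (hd : |d| ≤ s) (hcond : 1 ≤ s ∨ s ≤ 1 / 2) :
    (s ^ 2 - d ^ 2) * sinh t ^ 2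
      ≤ cosh ((1 - s) * t) ^ 2 * (sinh (s * t) ^ 2 - sinh (d * t) ^ 2) := by
  -- Both sides are even in `t`.
  wlog ht : 0 ≤ t generalizing t
  · simpa using this (t := -t) (by linarith)
  rcases ((abs_nonneg d).trans hd).eq_or_lt with rfl | hs
  · obtain rfl : d = 0 := abs_nonpos_iff.1 hd
    simp
  have hsd : 0 ≤ s ^ 2 - d ^ 2 := by
    rw [sub_nonneg]; exact sq_le_sq.2 (by rwa [abs_of_pos hs])
  have h1 := pow_le_pow_left₀ (mul_nonneg hs.le (sinh_nonneg_iff.2 ht))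
    (mul_sinh_le_cosh_mul_sinh hs.le ht hcond) 2
  have h2 := mul_le_mul_of_nonneg_left (sq_mul_sinh_sq_le hs hd ht)
    (sq_nonneg (cosh ((1 - s) * t)))
  have h3 := mul_le_mul_of_nonneg_left h1 hsd
  refine le_of_mul_le_mul_left ?_ (pow_pos hs 2)
  linarith

lemma fWYD_exp (a L M : ℝ) : fWYD a (exp L) (exp M)
    = 2 * exp ((L + M) / 2) * cosh ((2 * a - 1) * ((L - M) / 2)) := by
  rw [fWYD, cosh_eq, ← exp_mul, ← exp_mul, ← exp_mul, ← exp_mul, ← exp_add, ← exp_add]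
  rw [show ∀ x y z : ℝ, 2 * x * ((y + z) / 2) = x * y + x * z by intros; ring,
    ← exp_add, ← exp_add]
  ring_nf

/-- For `λ, μ > 0` and `α, β ≥ 0` with `α + β ≥ 1` or `α + β ≤ 1/2`,
`(λ + μ + f_{α+β}(λ,μ))² − (f_α(λ,μ) + f_β(λ,μ))² ≥ 16αβ(λ − μ)²`; equivalently for the
factored form. -/
theorem f_ineq (lam mu α β : ℝ) (hlam : 0 < lam) (hmu : 0 < mu)
    (hα : 0 ≤ α) (hβ : 0 ≤ β) (hcond : 1 ≤ α + β ∨ α + β ≤ 1/2) :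
    (lam + mu + fWYD (α + β) lam mu) ^ 2 - (fWYD α lam mu + fWYD β lam mu) ^ 2 ≥
      16 * α * β * (lam - mu) ^ 2 ∧
    (lam + mu + fWYD (α + β) lam mu - fWYD α lam mu - fWYD β lam mu) *
      (lam + mu + fWYD (α + β) lam mu + fWYD α lam mu + fWYD β lam mu) ≥
        16 * α * β * (lam - mu) ^ 2 := by
  have key : (lam + mu + fWYD (α + β) lam mu) ^ 2 - (fWYD α lam mu + fWYD β lam mu) ^ 2 ≥
      16 * α * β * (lam - mu) ^ 2 := by
    obtain ⟨L, rfl⟩ : ∃ L, exp L = lam := ⟨_, exp_log hlam⟩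
    obtain ⟨M, rfl⟩ : ∃ M, exp M = mu := ⟨_, exp_log hmu⟩
    simp only [fWYD_exp]
    obtain ⟨t, ht⟩ : ∃ t, t = (L - M) / 2 := ⟨_, rfl⟩
    obtain ⟨m, hm⟩ : ∃ m, m = exp ((L + M) / 2) := ⟨_, rfl⟩
    have hL : exp L = m * exp t := by rw [hm, ht, ← exp_add]; ring_nf
    have hM : exp M = m * exp (-t) := by rw [hm, ht, ← exp_add]; ring_nf
    have hadd : exp L + exp M = 2 * m * cosh t := by rw [hL, hM, cosh_eq]; ring
    have hsub : exp L - exp M = 2 * m * sinh t := by rw [hL, hM, sinh_eq]; ring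
    rw [hadd, hsub, ← ht, ← hm]
    have h := hyperbolic_ineq (s := α + β) (d := α - β) (t := t)
      (abs_le.2 ⟨by linarith, by linarith⟩) hcond
    have e1 : cosh t + cosh ((2 * (α + β) - 1) * t)
        = 2 * cosh ((α + β) * t) * cosh ((1 - (α + β)) * t) := by
      have h1 := cosh_add ((α + β) * t) ((1 - (α + β)) * t)
      have h2 := cosh_sub ((α + β) * t) ((1 - (α + β)) * t)
      rw [show (α + β) * t + (1 - (α + β)) * t = t by ring] at h1
      rw [show (α + β) * t - (1 - (α + β)) * t = (2 * (α + β) - 1) * t by ring] at h2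
      linarith
    have e2 : cosh ((2 * α - 1) * t) + cosh ((2 * β - 1) * t)
        = 2 * cosh ((α - β) * t) * cosh ((1 - (α + β)) * t) := by
      have h1 := cosh_add ((α - β) * t) ((1 - (α + β)) * t)
      have h2 := cosh_sub ((α - β) * t) ((1 - (α + β)) * t)
      rw [show (α - β) * t + (1 - (α + β)) * t = -((2 * β - 1) * t) by ring, cosh_neg] at h1
      rw [show (α - β) * t - (1 - (α + β)) * t = (2 * α - 1) * t by ring] at h2
      linarith
    rw [← mul_add, ← mul_add, e1, e2]
    have h4 := mul_le_mul_of_nonneg_left h (show (0 : ℝ) ≤ 16 * m ^ 2 by positivity)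
    rw [sinh_sq ((α + β) * t), sinh_sq ((α - β) * t)] at h4
    linarith
  refine ⟨key, ?_⟩
  linarith
end

section
/- Let ρ be an invertible density matrix on ℂⁿ, let H be an n×n Hermitian matrix, and let 0 ≤ α ≤ 1. Then 0 ≤ I_{ρ,α}(H) ≤ U_{ρ,α}(H) ≤ U_ρ(H), where U_ρ = U_{ρ,1/2}. -/
/-!
In an eigenbasis of `ρ` with eigenvalues `λᵢ`, write `gᵢⱼ` for the entries of `H₀` and
`T s = Tr[ρ^s H₀ ρ^{1-s} H₀] = ∑ᵢⱼ λᵢ^s λⱼ^{1-s} |gᵢⱼ|²`. Then `V = T 1`, `I_α = V - T α` and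
`U_α = √(V² - (T α)²)`, so the whole chain follows from `0 ≤ T (1/2) ≤ T α ≤ T 1`.

Since `|gᵢⱼ| = |gⱼᵢ|`, both nontrivial inequalities may be checked on the symmetrized weights
`λᵢ^s λⱼ^{1-s} + λⱼ^s λᵢ^{1-s}`. The sum of the two terms is at least twice their geometric mean
`√(λᵢ λⱼ)`, and at most `λᵢ + λⱼ` by the weighted AM-GM inequality.
-/

open Matrix ComplexOrder

/-- Real power of a positive definite matrix via functional calculus
(eigendecomposition). -/
noncomputable def matRpow {n : ℕ} {ρ : Matrix (Fin n) (Fin n) ℂ} (hρ : ρ.PosDef) (s : ℝ) :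
    Matrix (Fin n) (Fin n) ℂ :=
  (hρ.1.eigenvectorUnitary : Matrix (Fin n) (Fin n) ℂ) *
    Matrix.diagonal (fun i => ((hρ.1.eigenvalues i ^ s : ℝ) : ℂ)) *
    (star (hρ.1.eigenvectorUnitary : Matrix (Fin n) (Fin n) ℂ))

/-- `H₀ = H - Tr[ρH]·I`. -/
noncomputable def H0 {n : ℕ} (ρ H : Matrix (Fin n) (Fin n) ℂ) : Matrix (Fin n) (Fin n) ℂ :=
  H - (Matrix.trace (ρ * H)) • (1 : Matrix (Fin n) (Fin n) ℂ)

/-- One-parameter Wigner–Yanase–Dyson skew information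
`I_{ρ,α}(H) = Tr[ρH₀²] − Tr[ρ^α H₀ ρ^{1−α} H₀]`. -/
noncomputable def wyd1I {n : ℕ} {ρ : Matrix (Fin n) (Fin n) ℂ} (hρ : ρ.PosDef) (α : ℝ)
    (H : Matrix (Fin n) (Fin n) ℂ) : ℝ :=
  (Matrix.trace (ρ * H0 ρ H * H0 ρ H)
    - Matrix.trace (matRpow hρ α * H0 ρ H * matRpow hρ (1-α) * H0 ρ H)).re

/-- `J_{ρ,α}(H) = Tr[ρH₀²] + Tr[ρ^α H₀ ρ^{1−α} H₀]`. -/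
noncomputable def wyd1J {n : ℕ} {ρ : Matrix (Fin n) (Fin n) ℂ} (hρ : ρ.PosDef) (α : ℝ)
    (H : Matrix (Fin n) (Fin n) ℂ) : ℝ :=
  (Matrix.trace (ρ * H0 ρ H * H0 ρ H)
    + Matrix.trace (matRpow hρ α * H0 ρ H * matRpow hρ (1-α) * H0 ρ H)).re

/-- The variance `V_ρ(H) = Tr[ρH₀²]`. -/
noncomputable def varRho {n : ℕ} (ρ H : Matrix (Fin n) (Fin n) ℂ) : ℝ :=
  (Matrix.trace (ρ * H0 ρ H * H0 ρ H)).re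

/-- `U_{ρ,α}(H) = √(V_ρ(H)² − (V_ρ(H) − I_{ρ,α}(H))²)`. -/
noncomputable def wyd1U {n : ℕ} {ρ : Matrix (Fin n) (Fin n) ℂ} (hρ : ρ.PosDef) (α : ℝ)
    (H : Matrix (Fin n) (Fin n) ℂ) : ℝ :=
  Real.sqrt (varRho ρ H ^ 2 - (varRho ρ H - wyd1I hρ α H) ^ 2)

/-- Conjugating by the eigenvector unitary turns `Tr[ρ^s K ρ^t K]` into a weighted sum of the
squared moduli of the entries of `K` in an eigenbasis of `ρ`. -/
theorem trace_matRpow {n : ℕ} {ρ : Matrix (Fin n) (Fin n) ℂ} (hρ : ρ.PosDef)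
    {K : Matrix (Fin n) (Fin n) ℂ} (hK : K.IsHermitian) :
    ∃ w : Fin n → Fin n → ℝ, (∀ i j, 0 ≤ w i j) ∧ (∀ i j, w i j = w j i) ∧
      ∀ s t : ℝ, (Matrix.trace (matRpow hρ s * K * matRpow hρ t * K)).re =
        ∑ i, ∑ j, hρ.1.eigenvalues i ^ s * hρ.1.eigenvalues j ^ t * w i j := by
  set U : Matrix (Fin n) (Fin n) ℂ :=
    (hρ.1.eigenvectorUnitary : Matrix (Fin n) (Fin n) ℂ) with hU
  set G : Matrix (Fin n) (Fin n) ℂ := star U * K * U with hG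
  have hGH : G.IsHermitian := by
    simp only [Matrix.IsHermitian, hG, star_eq_conjTranspose, conjTranspose_mul,
      conjTranspose_conjTranspose, hK.eq, Matrix.mul_assoc]
  refine ⟨fun i j => Complex.normSq (G i j), fun i j => Complex.normSq_nonneg _, fun i j => ?_,
    fun s t => ?_⟩
  · beta_reduce
    rw [← hGH.apply i j]
    simp [Complex.normSq_conj]
  · set a : Fin n → ℂ := fun i => ((hρ.1.eigenvalues i ^ s : ℝ) : ℂ) with ha
    set b : Fin n → ℂ := fun i => ((hρ.1.eigenvalues i ^ t : ℝ) : ℂ) with hb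
    have h1 : Matrix.trace (matRpow hρ s * K * matRpow hρ t * K)
        = Matrix.trace ((diagonal a * G) * (diagonal b * G)) := by
      have : matRpow hρ s * K * matRpow hρ t * K
          = U * (diagonal a * star U * K * U * diagonal b * star U * K) := by
        simp only [matRpow, ← hU, ← ha, ← hb, Matrix.mul_assoc]
      rw [this, Matrix.trace_mul_comm]
      simp only [hG, Matrix.mul_assoc]
    rw [h1, Matrix.trace, Complex.re_sum]
    refine Finset.sum_congr rfl fun i _ => ?_
    rw [Matrix.diag_apply, Matrix.mul_apply, Complex.re_sum]
    refine Finset.sum_congr rfl fun j _ => ?_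
    rw [diagonal_mul, diagonal_mul, ← hGH.apply j i]
    have : a i * G i j * (b j * star (G i j))
        = ((hρ.1.eigenvalues i ^ s * hρ.1.eigenvalues j ^ t * Complex.normSq (G i j) : ℝ) : ℂ) := by
      push_cast
      rw [← Complex.mul_conj]
      simp only [ha, hb, Complex.star_def]
      ring
    rw [this, Complex.ofReal_re]

theorem matRpow_one {n : ℕ} {ρ : Matrix (Fin n) (Fin n) ℂ} (hρ : ρ.PosDef) :
    matRpow hρ 1 = ρ := by
  have h := hρ.1.spectral_theorem
  rw [Unitary.conjStarAlgAut_apply] at h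
  conv_rhs => rw [h]
  simp only [matRpow, Real.rpow_one]
  rfl

theorem matRpow_zero {n : ℕ} {ρ : Matrix (Fin n) (Fin n) ℂ} (hρ : ρ.PosDef) :
    matRpow hρ 0 = 1 := by
  simp [matRpow]

theorem H0_isHermitian {n : ℕ} {ρ H : Matrix (Fin n) (Fin n) ℂ} (hρ : ρ.PosDef)
    (hH : H.IsHermitian) : (H0 ρ H).IsHermitian := by
  have h : star (Matrix.trace (ρ * H)) = Matrix.trace (ρ * H) := by
    rw [← Matrix.trace_conjTranspose, conjTranspose_mul, hH.eq, hρ.1.eq, Matrix.trace_mul_comm]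
  rw [Matrix.IsHermitian, H0, conjTranspose_sub, conjTranspose_smul, hH.eq, h, conjTranspose_one]

/-- Under symmetric nonnegative weights, sums over pairs may be compared after symmetrizing
the summands. -/
theorem sum_le_sum_of_symm {n : ℕ} {w f g : Fin n → Fin n → ℝ} (hw : ∀ i j, 0 ≤ w i j)
    (hs : ∀ i j, w i j = w j i) (h : ∀ i j, f i j + f j i ≤ g i j + g j i) :
    ∑ i, ∑ j, f i j * w i j ≤ ∑ i, ∑ j, g i j * w i j := by
  have key : ∀ f : Fin n → Fin n → ℝ,
      2 * ∑ i, ∑ j, f i j * w i j = ∑ i, ∑ j, (f i j + f j i) * w i j := by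
    intro f
    have : ∑ i, ∑ j, f i j * w i j = ∑ i, ∑ j, f j i * w i j := by
      rw [Finset.sum_comm]
      simp only [fun i j => hs j i]
    simp only [add_mul, Finset.sum_add_distrib]
    linarith
  have : 2 * ∑ i, ∑ j, f i j * w i j ≤ 2 * ∑ i, ∑ j, g i j * w i j := by
    rw [key, key]
    exact Finset.sum_le_sum fun i _ => Finset.sum_le_sum fun j _ =>
      mul_le_mul_of_nonneg_right (h i j) (hw i j)
  linarith

/-- The symmetrized weights `x^s y^{1-s} + y^s x^{1-s}` are smallest at `s = 1/2`. -/
theorem rpow_half_symm_le {x y : ℝ} (hx : 0 < x) (hy : 0 < y) (s : ℝ) :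
    x ^ (1 / 2 : ℝ) * y ^ (1 - 1 / 2 : ℝ) + y ^ (1 / 2 : ℝ) * x ^ (1 - 1 / 2 : ℝ)
      ≤ x ^ s * y ^ (1 - s) + y ^ s * x ^ (1 - s) := by
  -- Both terms on the right are squares, and `√x√y` is the product of their square roots.
  have hp : x ^ s * y ^ (1 - s) = (x ^ (s / 2) * y ^ ((1 - s) / 2)) ^ 2 := by
    rw [mul_pow, ← Real.rpow_mul_natCast hx.le, ← Real.rpow_mul_natCast hy.le]
    congr 2 <;> push_cast <;> ring
  have hq : y ^ s * x ^ (1 - s) = (y ^ (s / 2) * x ^ ((1 - s) / 2)) ^ 2 := by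
    rw [mul_pow, ← Real.rpow_mul_natCast hx.le, ← Real.rpow_mul_natCast hy.le]
    congr 2 <;> push_cast <;> ring
  have hx2 : x ^ (1 / 2 : ℝ) = x ^ (s / 2) * x ^ ((1 - s) / 2) := by
    rw [← Real.rpow_add hx]; congr 1; ring
  have hy2 : y ^ (1 / 2 : ℝ) = y ^ (s / 2) * y ^ ((1 - s) / 2) := by
    rw [← Real.rpow_add hy]; congr 1; ring
  have h12 : (1 - 1 / 2 : ℝ) = 1 / 2 := by norm_num
  rw [h12, hp, hq, hx2, hy2]
  nlinarith [sq_nonneg (x ^ (s / 2) * y ^ ((1 - s) / 2) - y ^ (s / 2) * x ^ ((1 - s) / 2))]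

/-- The symmetrized weights `x^s y^{1-s} + y^s x^{1-s}` with `s ∈ [0, 1]` are largest at `s = 1`,
by the weighted AM-GM inequality. -/
theorem rpow_symm_le_one {x y : ℝ} (hx : 0 < x) (hy : 0 < y) {s : ℝ} (h0 : 0 ≤ s) (h1 : s ≤ 1) :
    x ^ s * y ^ (1 - s) + y ^ s * x ^ (1 - s)
      ≤ x ^ (1 : ℝ) * y ^ (1 - 1 : ℝ) + y ^ (1 : ℝ) * x ^ (1 - 1 : ℝ) := by
  have a := Real.geom_mean_le_arith_mean2_weighted h0 (sub_nonneg.2 h1) hx.le hy.le (by ring)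
  have b := Real.geom_mean_le_arith_mean2_weighted h0 (sub_nonneg.2 h1) hy.le hx.le (by ring)
  simp only [sub_self, Real.rpow_zero, Real.rpow_one, mul_one]
  linarith

/-- `0 ≤ I_{ρ,α}(H) ≤ U_{ρ,α}(H) ≤ U_ρ(H)`, where `U_ρ = U_{ρ,1/2}`. -/
theorem wyd1_U_chain {n : ℕ} (ρ H : Matrix (Fin n) (Fin n) ℂ) (hρ : ρ.PosDef)
    (hρtr : Matrix.trace ρ = 1) (hH : H.IsHermitian) (α : ℝ) (hα0 : 0 ≤ α) (hα1 : α ≤ 1) :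
    0 ≤ wyd1I hρ α H ∧ wyd1I hρ α H ≤ wyd1U hρ α H ∧ wyd1U hρ α H ≤ wyd1U hρ (1/2) H := by
  obtain ⟨w, hw, hs, hT⟩ := trace_matRpow hρ (H0_isHermitian hρ hH)
  have hpos := hρ.eigenvalues_pos
  set T : ℝ → ℝ := fun s =>
    (Matrix.trace (matRpow hρ s * H0 ρ H * matRpow hρ (1 - s) * H0 ρ H)).re with hTdef
  have hV : varRho ρ H = T 1 := by
    simp only [hTdef, sub_self, matRpow_one, matRpow_zero, Matrix.mul_one, varRho]
  have hI : ∀ s, wyd1I hρ s H = T 1 - T s := by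
    intro s
    rw [← hV, wyd1I, Complex.sub_re, varRho]
  have hhalf_nonneg : 0 ≤ T (1 / 2) := by
    simp only [hTdef, hT]
    exact Finset.sum_nonneg fun i _ => Finset.sum_nonneg fun j _ =>
      mul_nonneg (mul_nonneg (Real.rpow_nonneg (hpos i).le _) (Real.rpow_nonneg (hpos j).le _))
        (hw i j)
  have hhalf_le : T (1 / 2) ≤ T α := by
    simp only [hTdef, hT]
    refine sum_le_sum_of_symm hw hs ?_
    intro i j
    exact rpow_half_symm_le (hpos i) (hpos j) α
  have hle_one : T α ≤ T 1 := by
    simp only [hTdef, hT]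
    refine sum_le_sum_of_symm hw hs ?_
    intro i j
    exact rpow_symm_le_one (hpos i) (hpos j) hα0 hα1
  simp only [wyd1U, hI, hV, sub_sub_cancel]
  clear_value T
  refine ⟨by linarith, Real.le_sqrt_of_sq_le ?_, Real.sqrt_le_sqrt ?_⟩
  -- `(V - T)² ≤ (V - T) (V + T)` because `0 ≤ T ≤ V`
  · nlinarith [mul_nonneg (hhalf_nonneg.trans hhalf_le) (sub_nonneg.2 hle_one)]
  · exact sub_le_sub_left (pow_le_pow_left₀ hhalf_nonneg hhalf_le 2) _
end
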